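/- Let F be a CPLIFS with attractor Λ whose generated self-similar IFS has no exact overlapping, and let s ∈ (0, dim_H Λ), where dim_H denotes Hausdorff dimension. Then for every ε > 0 there exists δ > 0 such that every CPLIFS F̂ that is δ-close to F satisfies Φ̂(s) < Φ(s) + ε, where Φ and Φ̂ are the natural pressure functions of F and F̂. -/

import Mathlib

open Set Filter MeasureTheory

noncomputable section

/-- Composition `f_{i₁} ∘ ⋯ ∘ f_{iₙ}` of a family of maps of `ℝ` along a finite word
(the empty composition being the identity). -/
def compFam {ι : Type*} (S : ι → ℝ → ℝ) (w : List ι) : ℝ → ℝ :=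
  w.foldr (fun k g => S k ∘ g) id

/-- A family of maps of `ℝ` has *no exact overlapping* if for every `n ≥ 1` and all words
`ī, j̄` of length `n`, equality of the compositions `S_ī = S_j̄` (as functions) implies
`ī = j̄`. -/
def NoExactOverlap {ι : Type*} (S : ι → ℝ → ℝ) : Prop :=
  ∀ n : ℕ, 1 ≤ n → ∀ i j : Fin n → ι,
    compFam S (List.ofFn i) = compFam S (List.ofFn j) → i = j

/-- The supporting interval `I` of the system `{f_1, …, f_m}`:  if the maps have a common
fixed point `φ` (i.e. the attractor is the single point `φ`) it is `[φ - 1/2, φ + 1/2]`;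
otherwise it is the smallest nonempty compact interval sent into itself by all the maps,
i.e. the intersection of all such intervals. -/
def suppInt {m : ℕ} (f : Fin m → ℝ → ℝ) : Set ℝ :=
  haveI := Classical.propDecidable (∃ φ : ℝ, ∀ k, f k φ = φ)
  if h : ∃ φ : ℝ, ∀ k, f k φ = φ then
    Set.Icc (h.choose - 1 / 2) (h.choose + 1 / 2)
  else
    ⋂₀ {J : Set ℝ | J.Nonempty ∧ (∃ a b : ℝ, J = Set.Icc a b) ∧ ∀ k, f k '' J ⊆ J}

/-- The natural pressure function
`Φ(s) = limsup_{n → ∞} (1/n) log ∑_{(i₁,…,iₙ)} |I_{i₁…iₙ}|ˢ`,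
where `I_{i₁…iₙ} = f_{i₁} ∘ ⋯ ∘ f_{iₙ} (I)` are the cylinder intervals and `|·|` denotes
the length (diameter) of an interval. -/
def pressure {m : ℕ} (f : Fin m → ℝ → ℝ) (s : ℝ) : ℝ :=
  Filter.limsup
    (fun n : ℕ =>
      (n : ℝ)⁻¹ * Real.log (∑ w : Fin n → Fin m,
        Metric.diam (compFam f (List.ofFn w) '' suppInt f) ^ s))
    Filter.atTop

/-- A continuous piecewise linear iterated function system (CPLIFS) consisting of `m ≥ 2`
continuous piecewise linear maps `f k : ℝ → ℝ`; the map `f k` has the `l k` breaking points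
`b k 0 < … < b k (l k - 1)` and on the `i`-th open interval of linearity determined by them
it coincides with the affine map `x ↦ ρ k i * x + t k i`, where the slopes satisfy
`0 < |ρ k i| < 1` and consecutive slopes of each map are distinct. -/
structure CPLIFS (m : ℕ) (l : Fin m → ℕ) : Type where
  f : Fin m → ℝ → ℝ
  b : (k : Fin m) → Fin (l k) → ℝ
  ρ : (k : Fin m) → Fin (l k + 1) → ℝ
  t : (k : Fin m) → Fin (l k + 1) → ℝ
  hm : 2 ≤ m
  hb : ∀ k, StrictMono (b k)
  hρ0 : ∀ k i, ρ k i ≠ 0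
  hρ1 : ∀ k i, |ρ k i| < 1
  hconsec : ∀ k (i : Fin (l k)), ρ k i.castSucc ≠ ρ k i.succ
  hcont : ∀ k, Continuous (f k)
  haff : ∀ (k : Fin m) (i : Fin (l k + 1)) (x : ℝ),
    (∀ j : Fin (l k), (j : ℕ) < (i : ℕ) → b k j < x) →
    (∀ j : Fin (l k), (i : ℕ) ≤ (j : ℕ) → x < b k j) →
    f k x = ρ k i * x + t k i

namespace CPLIFS

variable {m : ℕ} {l : Fin m → ℕ}

/-- The index set of the affine pieces of a CPLIFS. -/
abbrev Idx (m : ℕ) (l : Fin m → ℕ) := Σ k : Fin m, Fin (l k + 1)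

/-- The self-similar IFS generated by a CPLIFS: the family of affine maps
`S_{k,i} x = ρ_{k,i} x + t_{k,i}` coinciding with `f k` on its `i`-th interval of
linearity. -/
def S (F : CPLIFS m l) (p : Idx m l) : ℝ → ℝ :=
  fun x => F.ρ p.1 p.2 * x + F.t p.1 p.2

/-- The supporting interval of a CPLIFS. -/
def supp (F : CPLIFS m l) : Set ℝ := suppInt F.f

/-- `𝓘 = f_1(I) ∪ … ∪ f_m(I)`. -/
def bigI (F : CPLIFS m l) : Set ℝ := ⋃ k, F.f k '' F.supp

/-- The `i`-th open interval of linearity of `f k`. -/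
def J (F : CPLIFS m l) (k : Fin m) (i : Fin (l k + 1)) : Set ℝ :=
  {x : ℝ | (∀ j : Fin (l k), (j : ℕ) < (i : ℕ) → F.b k j < x) ∧
           (∀ j : Fin (l k), (i : ℕ) ≤ (j : ℕ) → x < F.b k j)}

/-- The set of critical points of a CPLIFS: the `f k`-images of the endpoints of `I` and of
the breaking points, together with the points of `𝓘` at which two different branches
(local inverses of affine pieces) agree. -/
def crit (F : CPLIFS m l) : Set ℝ :=
  (⋃ k, ({F.f k (sInf F.supp), F.f k (sSup F.supp)} : Set ℝ)) ∪
  (⋃ k, ⋃ j : Fin (l k), ({F.f k (F.b k j)} : Set ℝ)) ∪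
  {x ∈ F.bigI | ∃ p q : Idx m l, p ≠ q ∧
      x ∈ F.f p.1 '' F.J p.1 p.2 ∧ x ∈ F.f q.1 '' F.J q.1 q.2 ∧
      (x - F.t p.1 p.2) / F.ρ p.1 p.2 = (x - F.t q.1 q.2) / F.ρ q.1 q.2}

/-- `Z : Fin N → ℝ × ℝ` is an (ordered) monotonicity partition of the CPLIFS `F` if the
closed intervals `[Z i .1, Z i .2]` are nondegenerate, ordered, cover `𝓘`, their endpoints
are critical points, and their interiors contain no critical point. -/
def IsMonoPartition (F : CPLIFS m l) (N : ℕ) (Z : Fin N → ℝ × ℝ) : Prop :=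
  (∀ i, (Z i).1 < (Z i).2) ∧
  (∀ i j : Fin N, i < j → (Z i).2 ≤ (Z j).1) ∧
  (⋃ i, Set.Icc (Z i).1 (Z i).2) = F.bigI ∧
  (∀ i, (Z i).1 ∈ F.crit ∧ (Z i).2 ∈ F.crit) ∧
  (∀ i, Set.Ioo (Z i).1 (Z i).2 ∩ F.crit = ∅)

/-- Two CPLIFSs (necessarily with the same number of maps and the same numbers of breaking
points) are ε-close if (a) their monotonicity partitions have the same cardinality and
corresponding intervals have endpoints within ε, (c) the logarithms of the absolute values
of corresponding slopes differ by less than ε, and (d) `sup_x |f_k x - g_k x| < ε`. -/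
def Close (ε : ℝ) (F G : CPLIFS m l) : Prop :=
  (∃ (N : ℕ) (Z W : Fin N → ℝ × ℝ), F.IsMonoPartition N Z ∧ G.IsMonoPartition N W ∧
      ∀ i, |(Z i).1 - (W i).1| < ε ∧ |(Z i).2 - (W i).2| < ε) ∧
  (∀ k i, abs (Real.log |F.ρ k i| - Real.log |G.ρ k i|) < ε) ∧
  (∀ k x, |F.f k x - G.f k x| < ε)

end CPLIFS

/-!
Without exact overlaps no breaking point is periodic under a composition that starts with its own
map: following the return along the two pieces adjacent to the breaking point would give two affine
compositions with a common fixed point, hence commuting ones.  So for every `M` there is a radius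
`r` such that two visits of an orbit to the `r`-neighbourhood of the same breaking point are at
least `M` steps apart, and for small `r` such visits make up an arbitrarily small proportion of any
long word.

If `G` is close to `F`, then so are its breaking points, and the orbits along a common word stay
close as well.  Hence, apart from the first few letters and from the visits above, the cylinders of
`F` and `G` lie in pieces of the same index, and the next map scales them by nearly equal slopes;
at the remaining steps their ratio changes by at most a constant factor.  The cylinder of `G` is
therefore longer than that of `F` by at most a factor `A * exp η ^ n`, with `η` arbitrarily small,
where `n` is the length of the word, which costs the pressure at most `s * η`.
-/

open scoped NNReal Topology

theorem exists_pos_forall_le {ι R : Type*} [Finite ι] [Semiring R] [LinearOrder R]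
    [IsStrictOrderedRing R] {c : ι → R} (hc : ∀ i, 0 < c i) : ∃ d > 0, ∀ i, d ≤ c i := by
  rcases isEmpty_or_nonempty ι with _ | _
  · exact ⟨1, one_pos, isEmptyElim⟩
  · obtain ⟨i, hi⟩ := Finite.exists_min c
    exact ⟨c i, hc i, hi⟩

theorem lipschitzWith_of_norm_deriv_right_le {E : Type*} [NormedAddCommGroup E] [NormedSpace ℝ E]
    {f f' : ℝ → E} {C : ℝ≥0} (hf : Continuous f)
    (hf' : ∀ x, HasDerivWithinAt f (f' x) (Ici x) x) (bound : ∀ x, ‖f' x‖ ≤ C) :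
    LipschitzWith C f := by
  have norm_sub_le {x y : ℝ} (hxy : x ≤ y) : ‖f y - f x‖ ≤ C * (y - x) :=
    norm_image_sub_le_of_norm_deriv_right_le_segment hf.continuousOn (fun z _ => hf' z)
      (fun z _ => bound z) y ⟨hxy, le_rfl⟩
  refine LipschitzWith.of_dist_le_mul fun x y => ?_
  rcases le_total x y with hxy | hyx
  · simpa only [dist_comm x, dist_comm (f x), dist_eq_norm, Real.norm_of_nonneg (sub_nonneg.2 hxy)]
      using norm_sub_le hxy
  · simpa only [dist_eq_norm, Real.norm_of_nonneg (sub_nonneg.2 hyx)] using norm_sub_le hyx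

theorem diam_image_of_eqOn_affine {𝕜 : Type*} [NormedField 𝕜] {f : 𝕜 → 𝕜} {a b : 𝕜} {T : Set 𝕜}
    (hf : EqOn f (fun x => a * x + b) T) : Metric.diam (f '' T) = ‖a‖ * Metric.diam T := by
  calc Metric.diam (f '' T) = Metric.diam ((· + b) '' ((a • ·) '' T)) := by
        rw [hf.image_eq, image_image]; rfl
    _ = ‖a‖ * Metric.diam T := by
        rw [(isometry_add_right b).diam_image]; exact diam_smul₀ a T

theorem diam_eq_volume_real {T : Set ℝ} (hT : IsConnected T) (hTc : IsCompact T) :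
    Metric.diam T = volume.real T := by
  have hle : sInf T ≤ sSup T := Real.sInf_le_sSup T hTc.bddBelow hTc.bddAbove
  rw [eq_Icc_of_connected_compact hT hTc, Real.diam_Icc hle, Real.volume_real_Icc_of_le hle]

theorem volume_real_le_diam {T : Set ℝ} (hT : Bornology.IsBounded T) :
    volume.real T ≤ Metric.diam T :=
  ENNReal.toReal_mono hT.ediam_ne_top (Real.volume_le_diam T)

theorem exists_forall_lt_iff_le_of_monotone {α : Type*} [LinearOrder α] {n : ℕ} {b : Fin n → α}
    (hb : Monotone b) (x : α) : ∃ i : Fin (n + 1), ∀ j : Fin n, j.castSucc < i ↔ b j ≤ x := by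
  classical
  have hex : ∃ i : ℕ, ∀ j : Fin n, i ≤ j → x < b j := ⟨n, fun j hj => absurd j.2 hj.not_gt⟩
  have hle : Nat.find hex ≤ n := Nat.find_min' hex fun j hj => absurd j.2 hj.not_gt
  refine ⟨⟨Nat.find hex, Nat.lt_succ_of_le hle⟩, fun j => ⟨fun hj => ?_, fun hj => ?_⟩⟩
  · obtain ⟨j', hjj', hj'⟩ : ∃ j' : Fin n, (j : ℕ) ≤ j' ∧ b j' ≤ x := by
      simpa only [not_forall, not_lt, exists_prop, Fin.val_castSucc] using Nat.find_min hex hj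
    exact (hb hjj').trans hj'
  · exact lt_of_not_ge fun hij => (Nat.find_spec hex j hij).not_ge hj

theorem abs_sub_lt_of_forall_exists {n : ℕ} {a b : Fin n → ℝ} {h : ℝ} (ha : StrictMono a)
    (hb : ∀ i j, i < j → 2 * h ≤ b j - b i) (hab : ∀ i, ∃ j, |a j - b i| < h) (i : Fin n) :
    |a i - b i| < h := by
  choose σ hσ using hab
  have hσmono : StrictMono σ := fun i j hij => ha.lt_iff_lt.1 <| by
    linarith [hb i j hij, (abs_lt.1 (hσ i)).2, (abs_lt.1 (hσ j)).1]
  simpa only [hσmono.apply_eq] using hσ i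

theorem abs_le_exp_mul_abs {a b c : ℝ} (ha : a ≠ 0) (hb : b ≠ 0)
    (h : abs (Real.log |a| - Real.log |b|) ≤ c) : |b| ≤ Real.exp c * |a| := by
  rw [← Real.exp_log (abs_pos.2 ha), ← Real.exp_log (abs_pos.2 hb), ← Real.exp_add]
  exact Real.exp_le_exp.2 (by linarith [(abs_le.1 h).1])

theorem pow_le_exp_mul_exp_pow {C a b : ℝ} (hC : 1 ≤ C) {n k : ℕ} (h : (n : ℝ) ≤ a * k + b) :
    C ^ n ≤ Real.exp (b * Real.log C) * Real.exp (a * Real.log C) ^ k := by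
  rw [← Real.exp_log (pow_pos (one_pos.trans_le hC) n), Real.log_pow, ← Real.exp_nat_mul,
    ← Real.exp_add]
  refine Real.exp_le_exp.2 ((mul_le_mul_of_nonneg_right h (Real.log_nonneg hC)).trans_eq ?_)
  ring

theorem commute_affine_of_isFixedPt {R : Type*} [CommRing R] {a b c d x : R}
    (hab : a * x + b = x) (hcd : c * x + d = x) :
    Function.Commute (fun y => a * y + b) (fun y => c * y + d) := fun y => by
  linear_combination (1 - c) * hab + (a - 1) * hcd

/-! ### Exponential growth rates -/

section growthRate

variable {a b : ℕ → ℝ} {A B : ℝ}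

theorem tendsto_inv_mul_log_const_mul_pow (hA : 0 < A) (hB : 0 < B) :
    Tendsto (fun n : ℕ => (n : ℝ)⁻¹ * Real.log (A * B ^ n)) atTop (𝓝 (Real.log B)) := by
  have hlim : Tendsto (fun n : ℕ => (n : ℝ)⁻¹ * Real.log A + Real.log B) atTop
      (𝓝 (Real.log B)) := by
    simpa using ((tendsto_inv_atTop_nhds_zero_nat (𝕜 := ℝ)).mul_const (Real.log A)).add_const
      (Real.log B)
  refine hlim.congr' ?_
  filter_upwards [eventually_ne_atTop 0] with n hn
  rw [Real.log_mul hA.ne' (pow_pos hB n).ne', Real.log_pow, mul_add,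
    inv_mul_cancel_left₀ (Nat.cast_ne_zero.2 hn)]

theorem isBoundedUnder_le_inv_mul_log (ha : ∀ n, 0 < a n) (hA : 0 < A) (hB : 0 < B)
    (h : ∀ n, a n ≤ A * B ^ n) :
    IsBoundedUnder (· ≤ ·) atTop fun n : ℕ => (n : ℝ)⁻¹ * Real.log (a n) :=
  (tendsto_inv_mul_log_const_mul_pow hA hB).isBoundedUnder_le.mono_le <| .of_forall fun n =>
    mul_le_mul_of_nonneg_left (Real.log_le_log (ha n) (h n)) (by positivity)

theorem isBoundedUnder_ge_inv_mul_log (hA : 0 < A) (hB : 0 < B) (h : ∀ n, A * B ^ n ≤ a n) :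
    IsBoundedUnder (· ≥ ·) atTop fun n : ℕ => (n : ℝ)⁻¹ * Real.log (a n) :=
  (tendsto_inv_mul_log_const_mul_pow hA hB).isBoundedUnder_ge.mono_ge <| .of_forall fun n =>
    mul_le_mul_of_nonneg_left (Real.log_le_log (by positivity) (h n)) (by positivity)

theorem limsup_inv_mul_log_le (hA : 0 < A) (hB : 0 < B) (ha : ∀ n, 0 < a n) (hb : ∀ n, 0 < b n)
    (h : ∀ n, a n ≤ A * B ^ n * b n)
    (ha_ge : IsBoundedUnder (· ≥ ·) atTop fun n : ℕ => (n : ℝ)⁻¹ * Real.log (a n))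
    (hb_ge : IsBoundedUnder (· ≥ ·) atTop fun n : ℕ => (n : ℝ)⁻¹ * Real.log (b n))
    (hb_le : IsBoundedUnder (· ≤ ·) atTop fun n : ℕ => (n : ℝ)⁻¹ * Real.log (b n)) :
    limsup (fun n : ℕ => (n : ℝ)⁻¹ * Real.log (a n)) atTop ≤
      Real.log B + limsup (fun n : ℕ => (n : ℝ)⁻¹ * Real.log (b n)) atTop := by
  have hlim := tendsto_inv_mul_log_const_mul_pow hA hB
  have log_le (n : ℕ) : (n : ℝ)⁻¹ * Real.log (a n) ≤
      (n : ℝ)⁻¹ * Real.log (A * B ^ n) + (n : ℝ)⁻¹ * Real.log (b n) := by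
    rw [← mul_add, ← Real.log_mul (by positivity) (hb n).ne']
    exact mul_le_mul_of_nonneg_left (Real.log_le_log (ha n) (h n)) (by positivity)
  calc limsup (fun n : ℕ => (n : ℝ)⁻¹ * Real.log (a n)) atTop
      ≤ limsup ((fun n : ℕ => (n : ℝ)⁻¹ * Real.log (A * B ^ n)) +
          fun n : ℕ => (n : ℝ)⁻¹ * Real.log (b n)) atTop :=
        limsup_le_limsup (.of_forall log_le) ha_ge.isCoboundedUnder_le
          (isBoundedUnder_le_add hlim.isBoundedUnder_le hb_le)
    _ ≤ limsup (fun n : ℕ => (n : ℝ)⁻¹ * Real.log (A * B ^ n)) atTop +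
          limsup (fun n : ℕ => (n : ℝ)⁻¹ * Real.log (b n)) atTop :=
        limsup_add_le hlim.isBoundedUnder_ge hlim.isBoundedUnder_le hb_ge.isCoboundedUnder_le hb_le
    _ = Real.log B + limsup (fun n : ℕ => (n : ℝ)⁻¹ * Real.log (b n)) atTop := by
        rw [hlim.limsup_eq]

end growthRate

/-! ### Counting suffixes of words -/

/-- The number of suffixes of the word `w`, including `w` itself and the empty word, that satisfy
`P`.  Since a composition along a word applies its last letter first, the suffixes of `w` are the
stages of the orbit of a point under `w`. -/
def suffixCount {α : Type*} (P : List α → Prop) (w : List α) : ℕ :=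
  open Classical in w.tails.countP (fun v => P v)

section suffixCount

variable {α : Type*} {P Q : List α → Prop}

open Classical in
theorem suffixCount_nil (P : List α → Prop) : suffixCount P [] = if P [] then 1 else 0 := by
  simp [suffixCount, List.countP_cons]

open Classical in
theorem suffixCount_cons (P : List α → Prop) (a : α) (w : List α) :
    suffixCount P (a :: w) = suffixCount P w + if P (a :: w) then 1 else 0 := by
  simp [suffixCount, List.countP_cons]

theorem suffixCount_le_length_add_one (P : List α → Prop) (w : List α) :
    suffixCount P w ≤ w.length + 1 := by
  simpa only [suffixCount, List.length_tails] using List.countP_le_length (l := w.tails)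

theorem suffixCount_length_le (N : ℕ) (w : List α) :
    suffixCount (fun v => v.length ≤ N) w ≤ N + 1 := by
  induction w with
  | nil => exact (suffixCount_le_length_add_one _ _).trans (by simp)
  | cons a w ih =>
    by_cases hw : (a :: w).length ≤ N
    · exact (suffixCount_le_length_add_one _ _).trans (by lia)
    · rwa [suffixCount_cons, if_neg hw]

theorem suffixCount_mono (h : ∀ w, P w → Q w) (w : List α) : suffixCount P w ≤ suffixCount Q w :=
  List.countP_mono_left fun v _ hv => by simpa using h v (by simpa using hv)

theorem suffixCount_or_le (P Q : List α → Prop) (w : List α) :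
    suffixCount (fun v => P v ∨ Q v) w ≤ suffixCount P w + suffixCount Q w := by
  induction w with
  | nil => simp only [suffixCount_nil]; grind
  | cons a w ih => simp only [suffixCount_cons]; grind

theorem suffixCount_exists_le {ι : Type*} [Fintype ι] (P : ι → List α → Prop) (w : List α) :
    suffixCount (fun v => ∃ i, P i v) w ≤ ∑ i, suffixCount (P i) w := by
  classical
  have hsum (t : Finset ι) :
      suffixCount (fun v => ∃ i ∈ t, P i v) w ≤ ∑ i ∈ t, suffixCount (P i) w := by
    induction t using Finset.induction_on with
    | empty => simp [suffixCount]
    | insert i t hi ih =>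
      simp only [Finset.exists_mem_insert, Finset.sum_insert hi]
      exact (suffixCount_or_le _ _ w).trans (by gcongr)
  simpa only [Finset.mem_univ, true_and] using hsum Finset.univ

theorem mul_suffixCount_le {M : ℕ} (hP : ∀ u v, u ≠ [] → P v → P (u ++ v) → M ≤ u.length)
    (w : List α) : M * suffixCount P w ≤ w.length + M := by
  classical
  have hlast : suffixCount P w = 0 ∨
      ∃ u v, u ++ v = w ∧ P v ∧ M * suffixCount P w ≤ v.length + M := by
    induction w with
    | nil =>
      by_cases h : P []
      · exact .inr ⟨[], [], rfl, h, by simp [suffixCount_nil, h]⟩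
      · exact .inl (by simp [suffixCount_nil, h])
    | cons a w ih =>
      rw [suffixCount_cons]
      by_cases h : P (a :: w)
      · refine .inr ⟨[], a :: w, rfl, h, ?_⟩
        rcases ih with hw | ⟨u, v, rfl, hv, hcount⟩
        · simp [hw, h]
        · have hgap := hP (a :: u) v (List.cons_ne_nil _ _) hv h
          simp only [if_pos h, mul_add, List.length_cons, List.length_append] at hgap ⊢
          lia
      · simp only [if_neg h, add_zero]
        exact ih.imp_right fun ⟨u, v, huv, hv, hcount⟩ => ⟨a :: u, v, by simp [huv], hv, hcount⟩
  rcases hlast with h | ⟨u, v, rfl, -, hcount⟩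
  · simp [h]
  · exact hcount.trans (by simp)

end suffixCount

/-! ### Compositions along words -/

section compFam

variable {ι : Type*} {f g : ι → ℝ → ℝ} {K : ℝ≥0}

theorem compFam_cons (f : ι → ℝ → ℝ) (k : ι) (w : List ι) :
    compFam f (k :: w) = f k ∘ compFam f w := rfl

theorem compFam_append (f : ι → ℝ → ℝ) (u v : List ι) :
    compFam f (u ++ v) = compFam f u ∘ compFam f v := by
  induction u with
  | nil => rfl
  | cons k u ih => rw [List.cons_append, compFam_cons, compFam_cons, ih, Function.comp_assoc]

theorem continuous_compFam (hf : ∀ k, Continuous (f k)) (w : List ι) :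
    Continuous (compFam f w) := by
  induction w with
  | nil => exact continuous_id
  | cons k w ih => exact (hf k).comp ih

theorem lipschitzWith_compFam (hf : ∀ k, LipschitzWith K (f k)) (w : List ι) :
    LipschitzWith (K ^ w.length) (compFam f w) := by
  induction w with
  | nil => exact (pow_zero K).symm ▸ LipschitzWith.id
  | cons k w ih => exact (pow_succ' K w.length).symm ▸ (hf k).comp ih

theorem dist_compFam_le (hK : K < 1) (hf : ∀ k, LipschitzWith K (f k)) {δ : ℝ} (hδ : 0 ≤ δ)
    (hfg : ∀ k x, dist (f k x) (g k x) ≤ δ) (w : List ι) (x : ℝ) :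
    dist (compFam f w x) (compFam g w x) ≤ δ / (1 - K) := by
  have hK' : (0 : ℝ) < 1 - K := sub_pos.2 hK
  induction w with
  | nil => simpa only [compFam, List.foldr_nil, dist_self] using div_nonneg hδ hK'.le
  | cons k w ih =>
    calc dist (f k (compFam f w x)) (g k (compFam g w x))
        ≤ K * dist (compFam f w x) (compFam g w x) + δ :=
          (dist_triangle _ _ _).trans (add_le_add ((hf k).dist_le_mul _ _) (hfg k _))
      _ ≤ K * (δ / (1 - K)) + δ := by gcongr
      _ = δ / (1 - K) := by field_simp; ring

theorem exists_forall_image_compFam_subset_closedBall (hK : K < 1)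
    (hf : ∀ k, LipschitzWith K (f k)) {S : Set ℝ} (hS : Bornology.IsBounded S) (x : ℝ) {r : ℝ}
    (hr : 0 < r) :
    ∃ N, ∀ w : List ι, N ≤ w.length → compFam f w '' S ⊆ Metric.closedBall (compFam f w x) r := by
  obtain ⟨R, hR⟩ := hS.subset_closedBall x
  have hlim : Tendsto (fun n => (K : ℝ) ^ n * R) atTop (𝓝 0) := by
    simpa using (tendsto_pow_atTop_nhds_zero_of_lt_one K.2 hK).mul_const R
  obtain ⟨N, hN⟩ := eventually_atTop.1 (hlim.eventually_le_const hr)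
  refine ⟨N, fun w hw => image_subset_iff.2 fun y hy => ?_⟩
  calc dist (compFam f w y) (compFam f w x)
      ≤ (K ^ w.length : ℝ≥0) * dist y x := (lipschitzWith_compFam hf w).dist_le_mul y x
    _ ≤ K ^ w.length * R := by push_cast; gcongr; exact hR hy
    _ ≤ r := hN _ hw

end compFam

theorem NoExactOverlap.eq_of_compFam_eq {ι : Type*} {S : ι → ℝ → ℝ} (hS : NoExactOverlap S)
    {p q : List ι} (hlen : p.length = q.length) (h : compFam S p = compFam S q) : p = q := by
  obtain ⟨n, p, rfl⟩ := List.exists_iff_exists_tuple.1 ⟨p, rfl⟩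
  obtain ⟨n', q, rfl⟩ := List.exists_iff_exists_tuple.1 ⟨q, rfl⟩
  obtain rfl : n = n' := by simpa using hlen
  rcases n.eq_zero_or_pos with rfl | hn
  · simp
  · rw [hS n hn p q h]

/-! ### The supporting interval -/

section suppInt

variable {ι : Type*} [Finite ι] {K : ℝ≥0}

theorem exists_mapsTo_closedBall {X : Type*} [PseudoMetricSpace X] {f : ι → X → X} (hK : K < 1)
    (hf : ∀ k, LipschitzWith K (f k)) (x : X) :
    ∃ R ≥ 0, ∀ k, MapsTo (f k) (Metric.closedBall x R) (Metric.closedBall x R) := by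
  have hK' : (0 : ℝ) < 1 - K := sub_pos.2 hK
  obtain ⟨B, hB⟩ := (finite_range fun k => dist (f k x) x).bddAbove
  refine ⟨max B 0 / (1 - K), by positivity, fun k y hy => ?_⟩
  calc dist (f k y) x
      ≤ K * dist y x + dist (f k x) x :=
        (dist_triangle _ _ _).trans (add_le_add_left ((hf k).dist_le_mul _ _) _)
    _ ≤ K * (max B 0 / (1 - K)) + max B 0 := by
        gcongr
        · exact hy
        · exact (hB (mem_range_self k)).trans (le_max_left _ _)
    _ = max B 0 / (1 - K) := by field_simp; ring

theorem exists_suppInt_eq_Icc {m : ℕ} {f : Fin m → ℝ → ℝ} (hf : ∀ k, ContractingWith K (f k)) :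
    ∃ a b, a < b ∧ suppInt f = Icc a b := by
  unfold suppInt
  split_ifs with hφ
  · exact ⟨_, _, by linarith, rfl⟩
  set 𝒥 := {J : Set ℝ | J.Nonempty ∧ (∃ a b : ℝ, J = Icc a b) ∧ ∀ k, f k '' J ⊆ J}
  obtain ⟨k₀⟩ : Nonempty (Fin m) := not_isEmpty_iff.1 fun _ => hφ ⟨0, isEmptyElim⟩
  obtain ⟨J₀, hJ₀⟩ : 𝒥.Nonempty := by
    obtain ⟨R, hR, hmaps⟩ := exists_mapsTo_closedBall (hf k₀).1 (fun k => (hf k).2) 0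
    exact ⟨Metric.closedBall 0 R, ⟨0, Metric.mem_closedBall_self hR⟩,
      ⟨_, _, Real.closedBall_eq_Icc⟩, fun k => (hmaps k).image_subset⟩
  have fixedPoint_mem (k : Fin m) : (hf k).fixedPoint ∈ ⋂₀ 𝒥 := by
    rintro _ ⟨hne, ⟨a, b, rfl⟩, hinv⟩
    obtain ⟨x, hx, hfx⟩ := exists_mem_Icc_isFixedPt_of_mapsTo (hf k).2.continuous.continuousOn
      (nonempty_Icc.1 hne) (mapsTo_iff_image_subset.2 (hinv k))
    rwa [← (hf k).fixedPoint_unique hfx]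
  have hconn : IsConnected (⋂₀ 𝒥) := by
    refine ⟨⟨_, fixedPoint_mem k₀⟩, (ordConnected_sInter ?_).isPreconnected⟩
    rintro _ ⟨-, ⟨a, b, rfl⟩, -⟩
    exact ordConnected_Icc
  have hcomp : IsCompact (⋂₀ 𝒥) := by
    have isCompact_of_mem : ∀ J ∈ 𝒥, IsCompact J := by
      rintro _ ⟨-, ⟨a, b, rfl⟩, -⟩
      exact isCompact_Icc
    exact (isCompact_of_mem J₀ hJ₀).of_isClosed_subset
      (isClosed_sInter fun J hJ => (isCompact_of_mem J hJ).isClosed) (sInter_subset_of_mem hJ₀)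
  have hIcc := eq_Icc_of_connected_compact hconn hcomp
  refine ⟨_, _, lt_of_not_ge fun hle => hφ ⟨sInf (⋂₀ 𝒥), fun k => ?_⟩, hIcc⟩
  have hk := hIcc ▸ fixedPoint_mem k
  rw [← le_antisymm (hk.2.trans hle) hk.1]
  exact (hf k).fixedPoint_isFixedPt

end suppInt

namespace CPLIFS

variable {m : ℕ} {l : Fin m → ℕ}

/-! ### The closed intervals of linearity -/

/-- The closed interval of linearity `J_{k,i}` of `f k`: the closure of the open interval
`F.J k i`.  It contains the breaking points of index `i - 1` and `i`, when these exist. -/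
def piece (F : CPLIFS m l) (k : Fin m) (i : Fin (l k + 1)) : Set ℝ :=
  {x | (∀ j : Fin (l k), j.castSucc < i → F.b k j ≤ x) ∧
    ∀ j : Fin (l k), i ≤ j.castSucc → x ≤ F.b k j}

theorem eqOn_J (F : CPLIFS m l) (k : Fin m) (i : Fin (l k + 1)) :
    EqOn (F.f k) (fun x => F.ρ k i * x + F.t k i) (F.J k i) :=
  fun x hx => F.haff k i x hx.1 hx.2

theorem nonempty_J (F : CPLIFS m l) (k : Fin m) (i : Fin (l k + 1)) : (F.J k i).Nonempty := by
  obtain ⟨x, hlow, hup⟩ := Set.Finite.exists_between' (s := F.b k '' {j | (j : ℕ) < i})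
    (t := F.b k '' {j | (i : ℕ) ≤ j}) (toFinite _) (toFinite _) <| by
      rintro _ ⟨j, hj, rfl⟩ _ ⟨j', hj', rfl⟩
      exact F.hb k (Fin.lt_def.2 (lt_of_lt_of_le hj hj'))
  exact ⟨x, fun j hj => hlow _ ⟨j, hj, rfl⟩, fun j hj => hup _ ⟨j, hj, rfl⟩⟩

theorem piece_subset_closure_J (F : CPLIFS m l) (k : Fin m) (i : Fin (l k + 1)) :
    F.piece k i ⊆ closure (F.J k i) := by
  obtain ⟨z, hz⟩ := F.nonempty_J k i
  intro x hx
  refine closure_mono ?_ (segment_subset_closure_openSegment (left_mem_segment ℝ x z))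
  rintro _ ⟨a, c, ha, hc, hac, rfl⟩
  simp only [smul_eq_mul]
  refine ⟨fun j hj => ?_, fun j hj => ?_⟩
  · calc F.b k j = a * F.b k j + c * F.b k j := by rw [← add_mul, hac, one_mul]
      _ < a * x + c * z := add_lt_add_of_le_of_lt
        (mul_le_mul_of_nonneg_left (hx.1 j hj) ha.le) (mul_lt_mul_of_pos_left (hz.1 j hj) hc)
  · calc a * x + c * z
      _ < a * F.b k j + c * F.b k j := add_lt_add_of_le_of_lt
        (mul_le_mul_of_nonneg_left (hx.2 j hj) ha.le) (mul_lt_mul_of_pos_left (hz.2 j hj) hc)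
      _ = F.b k j := by rw [← add_mul, hac, one_mul]

theorem eqOn_piece (F : CPLIFS m l) (k : Fin m) (i : Fin (l k + 1)) :
    EqOn (F.f k) (fun x => F.ρ k i * x + F.t k i) (F.piece k i) :=
  (F.eqOn_J k i).of_subset_closure (F.hcont k).continuousOn (by fun_prop)
    (fun _ hx => ⟨fun j hj => (hx.1 j hj).le, fun j hj => (hx.2 j hj).le⟩)
    (F.piece_subset_closure_J k i)

theorem b_mem_piece_castSucc (F : CPLIFS m l) (k : Fin m) (j : Fin (l k)) :
    F.b k j ∈ F.piece k j.castSucc :=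
  ⟨fun _ h => (F.hb k).monotone (Fin.castSucc_lt_castSucc_iff.1 h).le,
    fun _ h => (F.hb k).monotone (Fin.castSucc_le_castSucc_iff.1 h)⟩

theorem b_mem_piece_succ (F : CPLIFS m l) (k : Fin m) (j : Fin (l k)) :
    F.b k j ∈ F.piece k j.succ :=
  ⟨fun _ h => (F.hb k).monotone (Fin.castSucc_lt_succ_iff.1 h),
    fun _ h => (F.hb k).monotone (Fin.succ_le_castSucc_iff.1 h).le⟩

theorem exists_piece_mem_nhdsGE (F : CPLIFS m l) (k : Fin m) (x : ℝ) :
    ∃ i, F.piece k i ∈ 𝓝[≥] x := by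
  obtain ⟨i, hi⟩ := exists_forall_lt_iff_le_of_monotone (F.hb k).monotone x
  have hlt (j : Fin (l k)) (hj : i ≤ j.castSucc) : x < F.b k j :=
    lt_of_not_ge fun hle => ((hi j).2 hle).not_ge hj
  have hup : ∀ᶠ y in 𝓝[≥] x, ∀ j : Fin (l k), i ≤ j.castSucc → y ≤ F.b k j :=
    eventually_all.2 fun j => by
      by_cases hj : i ≤ j.castSucc
      · filter_upwards [nhdsWithin_le_nhds (Iio_mem_nhds (hlt j hj))] with y hy _ using le_of_lt hy
      · exact Eventually.of_forall fun y h => absurd h hj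
  refine ⟨i, ?_⟩
  filter_upwards [hup, self_mem_nhdsWithin] with y hy hxy
  exact ⟨fun j hj => ((hi j).1 hj).trans hxy, hy⟩

theorem iUnion_piece (F : CPLIFS m l) (k : Fin m) : ⋃ i, F.piece k i = univ :=
  eq_univ_of_forall fun x =>
    let ⟨i, hi⟩ := F.exists_piece_mem_nhdsGE k x
    mem_iUnion.2 ⟨i, mem_of_mem_nhdsWithin self_mem_Ici hi⟩

theorem exists_hasDerivWithinAt_Ici (F : CPLIFS m l) (k : Fin m) (x : ℝ) :
    ∃ i, HasDerivWithinAt (F.f k) (F.ρ k i) (Ici x) x := by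
  obtain ⟨i, hi⟩ := F.exists_piece_mem_nhdsGE k x
  have haffine : HasDerivWithinAt (fun y => F.ρ k i * y + F.t k i) (F.ρ k i) (Ici x) x := by
    simpa using (((hasDerivAt_id x).const_mul (F.ρ k i)).add_const (F.t k i)).hasDerivWithinAt
  exact ⟨i, haffine.congr_of_eventuallyEq (eventually_of_mem hi (F.eqOn_piece k i))
    (F.eqOn_piece k i (mem_of_mem_nhdsWithin self_mem_Ici hi))⟩

theorem exists_contractingWith (F : CPLIFS m l) : ∃ K, ∀ k, ContractingWith K (F.f k) := by
  obtain ⟨d, hd, hρ⟩ := exists_pos_forall_le (c := fun p : Idx m l => 1 - |F.ρ p.1 p.2|)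
    fun p => sub_pos.2 (F.hρ1 p.1 p.2)
  refine ⟨(1 - d).toNNReal, fun k => ⟨Real.toNNReal_lt_one.2 (by linarith), ?_⟩⟩
  choose i hi using F.exists_hasDerivWithinAt_Ici k
  refine lipschitzWith_of_norm_deriv_right_le (F.hcont k) hi fun x => ?_
  exact (le_sub_comm.1 (hρ ⟨k, i x⟩)).trans (Real.le_coe_toNNReal _)

theorem lipschitzWith_one_compFam (F : CPLIFS m l) (w : List (Fin m)) :
    LipschitzWith 1 (compFam F.f w) := by
  obtain ⟨K, hK⟩ := F.exists_contractingWith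
  simpa using lipschitzWith_compFam (fun k => (hK k).2.weaken (hK k).1.le) w

theorem diam_le_mul_diam_image (F : CPLIFS m l) (k : Fin m) {T : Set ℝ} (hT : IsConnected T)
    (hTc : IsCompact T) :
    Metric.diam T ≤ (∑ i, |F.ρ k i|⁻¹) * Metric.diam (F.f k '' T) := by
  have hbdd : Bornology.IsBounded (F.f k '' T) := (hTc.image (F.hcont k)).isBounded
  have diam_inter_le (i : Fin (l k + 1)) :
      Metric.diam (T ∩ F.piece k i) ≤ |F.ρ k i|⁻¹ * Metric.diam (F.f k '' T) := by
    rw [le_inv_mul_iff₀ (abs_pos.2 (F.hρ0 k i)), ← Real.norm_eq_abs,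
      ← diam_image_of_eqOn_affine ((F.eqOn_piece k i).mono inter_subset_right)]
    exact Metric.diam_mono (image_mono inter_subset_left) hbdd
  calc Metric.diam T = volume.real (⋃ i, T ∩ F.piece k i) := by
        rw [← inter_iUnion, iUnion_piece, inter_univ, diam_eq_volume_real hT hTc]
    _ ≤ ∑ i, volume.real (T ∩ F.piece k i) := measureReal_iUnion_fintype_le _
    _ ≤ ∑ i, |F.ρ k i|⁻¹ * Metric.diam (F.f k '' T) := Finset.sum_le_sum fun i _ =>
        (volume_real_le_diam (hTc.isBounded.subset inter_subset_left)).trans (diam_inter_le i)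
    _ = (∑ i, |F.ρ k i|⁻¹) * Metric.diam (F.f k '' T) := (Finset.sum_mul _ _ _).symm

theorem exists_diam_le_mul_diam_image (F : CPLIFS m l) :
    ∃ C ≥ 1, ∀ k T, IsConnected T → IsCompact T →
      Metric.diam T ≤ C * Metric.diam (F.f k '' T) := by
  obtain ⟨C, hC⟩ := (finite_range fun k => ∑ i, |F.ρ k i|⁻¹).bddAbove
  refine ⟨max C 1, le_max_right _ _, fun k T hT hTc => ?_⟩
  refine (F.diam_le_mul_diam_image k hT hTc).trans ?_
  gcongr
  exact (hC (mem_range_self k)).trans (le_max_left _ _)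

theorem diam_le_pow_mul_diam_image_compFam (F : CPLIFS m l) {C : ℝ} (hC0 : 0 ≤ C)
    (hC : ∀ k T, IsConnected T → IsCompact T → Metric.diam T ≤ C * Metric.diam (F.f k '' T))
    {S : Set ℝ} (hS : IsConnected S) (hSc : IsCompact S) (w : List (Fin m)) :
    Metric.diam S ≤ C ^ w.length * Metric.diam (compFam F.f w '' S) := by
  induction w with
  | nil => simp [compFam]
  | cons k w ih =>
    have hcont := continuous_compFam F.hcont w
    calc Metric.diam S ≤ C ^ w.length * Metric.diam (compFam F.f w '' S) := ih
      _ ≤ C ^ w.length * (C * Metric.diam (F.f k '' (compFam F.f w '' S))) := by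
          gcongr
          exact hC k _ (hS.image _ hcont.continuousOn) (hSc.image hcont)
      _ = C ^ (k :: w).length * Metric.diam (compFam F.f (k :: w) '' S) := by
          rw [compFam_cons, image_comp, List.length_cons, pow_succ, mul_assoc]

theorem exists_closedBall_subset_piece (F : CPLIFS m l) (k : Fin m) {y r : ℝ}
    (h : ∀ j, r ≤ |y - F.b k j|) : ∃ i, Metric.closedBall y r ⊆ F.piece k i := by
  obtain ⟨i, hi⟩ := exists_forall_lt_iff_le_of_monotone (F.hb k).monotone y
  refine ⟨i, fun z hz => ?_⟩
  rw [Real.closedBall_eq_Icc] at hz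
  refine ⟨fun j hj => ?_, fun j hj => ?_⟩
  · linarith [abs_of_nonneg (sub_nonneg.2 ((hi j).1 hj)) ▸ h j, hz.1]
  · have hlt : y < F.b k j := lt_of_not_ge fun hle => ((hi j).2 hle).not_ge hj
    linarith [abs_of_neg (sub_neg.2 hlt) ▸ h j, hz.2]

theorem closedBall_sub_subset_piece {F G : CPLIFS m l} {k : Fin m} {i : Fin (l k + 1)}
    {y r d : ℝ} (hr : 0 ≤ r) (hF : Metric.closedBall y r ⊆ F.piece k i)
    (hFG : ∀ j, |G.b k j - F.b k j| ≤ d) : Metric.closedBall y (r - d) ⊆ G.piece k i := by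
  rw [Real.closedBall_eq_Icc] at hF ⊢
  have hleft := hF (left_mem_Icc.2 (by linarith))
  have hright := hF (right_mem_Icc.2 (by linarith))
  refine fun z hz => ⟨fun j hj => ?_, fun j hj => ?_⟩
  · linarith [hleft.1 j hj, (abs_le.1 (hFG j)).2, hz.1]
  · linarith [hright.2 j hj, (abs_le.1 (hFG j)).1, hz.2]

/-! ### Breaking points depend continuously on the maps -/

theorem exists_forall_le_break_sub (F : CPLIFS m l) :
    ∃ d > 0, ∀ k j j', j < j' → d ≤ F.b k j' - F.b k j := by
  obtain ⟨d, hd, hb⟩ := exists_pos_forall_le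
    (c := fun p : Σ k : Fin m, {q : Fin (l k) × Fin (l k) // q.1 < q.2} =>
      F.b p.1 p.2.1.2 - F.b p.1 p.2.1.1) fun p => sub_pos.2 (F.hb p.1 p.2.2)
  exact ⟨d, hd, fun k j j' hj => hb ⟨k, (j, j'), hj⟩⟩

theorem exists_forall_le_abs_slope_sub (F : CPLIFS m l) :
    ∃ e > 0, ∀ k j, e ≤ |F.ρ k (Fin.succ j) - F.ρ k j.castSucc| := by
  obtain ⟨e, he, hρ⟩ := exists_pos_forall_le
    (c := fun p : Σ k : Fin m, Fin (l k) => |F.ρ p.1 p.2.succ - F.ρ p.1 p.2.castSucc|)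
    fun p => abs_pos.2 (sub_ne_zero.2 (F.hconsec p.1 p.2).symm)
  exact ⟨e, he, fun k j => hρ ⟨k, j⟩⟩

theorem add_mem_piece_succ {F : CPLIFS m l} {k : Fin m} {j : Fin (l k)} {h : ℝ} (h0 : 0 ≤ h)
    (hgap : ∀ j', j < j' → h ≤ F.b k j' - F.b k j) : F.b k j + h ∈ F.piece k j.succ :=
  ⟨fun j' hj' => ((F.b_mem_piece_succ k j).1 j' hj').trans (le_add_of_nonneg_right h0),
    fun j' hj' => by linarith [hgap j' (Fin.succ_le_castSucc_iff.1 hj')]⟩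

theorem sub_mem_piece_castSucc {F : CPLIFS m l} {k : Fin m} {j : Fin (l k)} {h : ℝ} (h0 : 0 ≤ h)
    (hgap : ∀ j', j' < j → h ≤ F.b k j - F.b k j') : F.b k j - h ∈ F.piece k j.castSucc :=
  ⟨fun j' hj' => by linarith [hgap j' (Fin.castSucc_lt_castSucc_iff.1 hj')],
    fun j' hj' => (sub_le_self _ h0).trans ((F.b_mem_piece_castSucc k j).2 j' hj')⟩

-- The second difference with step `h` of `F.f k` at its breaking point is `h` times the jump of
-- the slope, whereas that of `G.f k` vanishes if `G.f k` is affine on the whole ball.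
theorem exists_abs_break_sub_lt {F G : CPLIFS m l} {k : Fin m} {j : Fin (l k)} {h δ : ℝ}
    (h0 : 0 ≤ h) (hsucc : F.b k j + h ∈ F.piece k j.succ)
    (hcastSucc : F.b k j - h ∈ F.piece k j.castSucc)
    (hFG : ∀ x, |F.f k x - G.f k x| < δ)
    (hδ : 4 * δ ≤ |F.ρ k j.succ - F.ρ k j.castSucc| * h) :
    ∃ j', |G.b k j' - F.b k j| < h := by
  by_contra! hfar
  obtain ⟨i, hi⟩ := G.exists_closedBall_subset_piece k
    fun j' => abs_sub_comm (G.b k j') (F.b k j) ▸ hfar j'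
  rw [Real.closedBall_eq_Icc] at hi
  set b := F.b k j
  have secondDiff_F : F.f k (b + h) + F.f k (b - h) - 2 * F.f k b =
      (F.ρ k j.succ - F.ρ k j.castSucc) * h := by
    linear_combination F.eqOn_piece k _ hsucc + F.eqOn_piece k _ hcastSucc -
      F.eqOn_piece k _ (F.b_mem_piece_succ k j) - F.eqOn_piece k _ (F.b_mem_piece_castSucc k j)
  have hle : b - h ≤ b + h := by linarith
  have secondDiff_G : G.f k (b + h) + G.f k (b - h) - 2 * G.f k b = 0 := by
    linear_combination G.eqOn_piece k i (hi (right_mem_Icc.2 hle)) +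
      G.eqOn_piece k i (hi (left_mem_Icc.2 hle)) -
      2 * G.eqOn_piece k i (hi ⟨by linarith, by linarith⟩)
  have hlt : |(F.ρ k j.succ - F.ρ k j.castSucc) * h| < 4 * δ := by
    have hright := abs_lt.1 (hFG (b + h))
    have hleft := abs_lt.1 (hFG (b - h))
    have hmid := abs_lt.1 (hFG b)
    rw [← secondDiff_F, abs_lt]
    constructor <;> linarith [hright.1, hright.2, hleft.1, hleft.2, hmid.1, hmid.2]
  rw [abs_mul, abs_of_nonneg h0] at hlt
  exact hlt.not_ge hδ

theorem exists_forall_abs_break_sub_lt (F : CPLIFS m l) {r : ℝ} (hr : 0 < r) :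
    ∃ δ > 0, ∀ G : CPLIFS m l, (∀ k x, |F.f k x - G.f k x| < δ) →
      ∀ k j, |G.b k j - F.b k j| < r := by
  obtain ⟨d, hd, hgap⟩ := F.exists_forall_le_break_sub
  obtain ⟨e, he, hjump⟩ := F.exists_forall_le_abs_slope_sub
  obtain ⟨h, h0, hhr, hhd⟩ : ∃ h > 0, h ≤ r ∧ 2 * h ≤ d :=
    ⟨min r (d / 2), by positivity, min_le_left _ _, by linarith [min_le_right r (d / 2)]⟩
  refine ⟨e * h / 4, by positivity, fun G hFG k j => lt_of_lt_of_le ?_ hhr⟩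
  refine abs_sub_lt_of_forall_exists (G.hb k) (fun i j hij => hhd.trans (hgap k i j hij))
    (fun j => exists_abs_break_sub_lt h0.le
      (add_mem_piece_succ h0.le fun j' hj' => by linarith [hgap k j j' hj'])
      (sub_mem_piece_castSucc h0.le fun j' hj' => by linarith [hgap k j' j hj']) (hFG k) ?_) j
  rw [mul_div_cancel₀ _ four_ne_zero]
  gcongr
  exact hjump k j

/-! ### Visits to breaking points -/

/-- No breaking point `b_{k,j}` is periodic under a composition that first applies `f k`.  This is
what the absence of exact overlapping is used for. -/
def BreaksNonperiodic (F : CPLIFS m l) : Prop :=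
  ∀ (k : Fin m) (j : Fin (l k)) (u : List (Fin m)), compFam F.f (u ++ [k]) (F.b k j) ≠ F.b k j

theorem exists_compFam_S_eq_affine (F : CPLIFS m l) (p : List (Idx m l)) :
    ∃ a b, compFam F.S p = fun x => a * x + b := by
  induction p with
  | nil => exact ⟨1, 0, funext fun x => by simp [compFam]⟩
  | cons q p ih =>
    obtain ⟨a, b, hab⟩ := ih
    refine ⟨F.ρ q.1 q.2 * a, F.ρ q.1 q.2 * b + F.t q.1 q.2, funext fun x => ?_⟩
    rw [compFam_cons, Function.comp_apply, hab, S]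
    ring

theorem exists_compFam_S_eq_compFam_f (F : CPLIFS m l) (u : List (Fin m)) (x : ℝ) :
    ∃ p : List (Idx m l), compFam F.S p x = compFam F.f u x := by
  induction u with
  | nil => exact ⟨[], rfl⟩
  | cons k u ih =>
    obtain ⟨p, hp⟩ := ih
    obtain ⟨i, hi⟩ := mem_iUnion.1 ((F.iUnion_piece k).symm ▸ mem_univ (compFam F.f u x))
    exact ⟨⟨k, i⟩ :: p, (congrArg (F.S ⟨k, i⟩) hp).trans (F.eqOn_piece k i hi).symm⟩

-- A return of `b_{k,j}` to itself can be followed along either piece adjacent to `b_{k,j}`.  The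
-- two resulting affine maps share the fixed point `b_{k,j}`, hence commute: an exact overlap.
theorem breaksNonperiodic_of_noExactOverlap {F : CPLIFS m l} (hF : NoExactOverlap F.S) :
    F.BreaksNonperiodic := by
  intro k j u hu
  rw [compFam_append, Function.comp_apply] at hu
  obtain ⟨p, hp⟩ := F.exists_compFam_S_eq_compFam_f u (F.f k (F.b k j))
  have isFixedPt (i : Fin (l k + 1)) (hi : F.b k j ∈ F.piece k i) :
      compFam F.S (p ++ [⟨k, i⟩]) (F.b k j) = F.b k j := by
    have hS : compFam F.S [⟨k, i⟩] (F.b k j) = F.f k (F.b k j) := (F.eqOn_piece k i hi).symm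
    rw [compFam_append, Function.comp_apply, hS, hp]
    exact hu
  set p₁ : List (Idx m l) := p ++ [⟨k, j.castSucc⟩]
  set p₂ : List (Idx m l) := p ++ [⟨k, j.succ⟩]
  obtain ⟨a₁, b₁, h₁⟩ := F.exists_compFam_S_eq_affine p₁
  obtain ⟨a₂, b₂, h₂⟩ := F.exists_compFam_S_eq_affine p₂
  have hcomm : Function.Commute (compFam F.S p₁) (compFam F.S p₂) := by
    have hfix₁ := isFixedPt _ (F.b_mem_piece_castSucc k j)
    have hfix₂ := isFixedPt _ (F.b_mem_piece_succ k j)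
    rw [h₁] at hfix₁ ⊢
    rw [h₂] at hfix₂ ⊢
    exact commute_affine_of_isFixedPt hfix₁ hfix₂
  have hword : p₁ ++ p₂ = p₂ ++ p₁ := hF.eq_of_compFam_eq (by simp [p₁, p₂]) <| by
    rw [compFam_append F.S p₁, compFam_append F.S p₂, hcomm.comp_eq]
  have hlast : p₁ = p₂ := (List.append_inj hword (by simp [p₁, p₂])).1
  simp [p₁, p₂, Fin.ext_iff] at hlast

theorem BreaksNonperiodic.exists_forall_le_abs_sub {F : CPLIFS m l} (hF : F.BreaksNonperiodic)
    (M : ℕ) : ∃ d > 0, ∀ k j (u : List (Fin m)), u.length < M →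
      d ≤ |compFam F.f (u ++ [k]) (F.b k j) - F.b k j| := by
  have : Finite {u : List (Fin m) | u.length < M} := (List.finite_length_lt (Fin m) M).to_subtype
  obtain ⟨d, hd, hle⟩ := exists_pos_forall_le
    (c := fun q : (Σ k : Fin m, Fin (l k)) × {u : List (Fin m) | u.length < M} =>
      |compFam F.f (q.2 ++ [q.1.1]) (F.b q.1.1 q.1.2) - F.b q.1.1 q.1.2|)
    fun q => abs_pos.2 (sub_ne_zero.2 (hF _ _ _))
  exact ⟨d, hd, fun k j u hu => hle ⟨⟨k, j⟩, ⟨u, hu⟩⟩⟩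

/-- The orbit of `x` along `w` is about to apply `f k` at distance less than `r` from the breaking
point `b_{k,j}`, where `p = ⟨k, j⟩`. -/
def NearBreak (F : CPLIFS m l) (r x : ℝ) (p : Σ k : Fin m, Fin (l k)) (w : List (Fin m)) : Prop :=
  ∃ v, w = p.1 :: v ∧ |compFam F.f v x - F.b p.1 p.2| < r

theorem NearBreak.le_length {F : CPLIFS m l} {r x : ℝ} {p : Σ k : Fin m, Fin (l k)}
    {u v : List (Fin m)} {M : ℕ}
    (hgap : ∀ u : List (Fin m), u.length < M →
      2 * r ≤ |compFam F.f (u ++ [p.1]) (F.b p.1 p.2) - F.b p.1 p.2|)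
    (hu : u ≠ []) (hv : F.NearBreak r x p v) (huv : F.NearBreak r x p (u ++ v)) :
    M ≤ u.length := by
  obtain ⟨v, rfl, hv⟩ := hv
  obtain ⟨w, hw, hwr⟩ := huv
  obtain ⟨k, u, rfl⟩ := List.exists_cons_of_ne_nil hu
  obtain ⟨-, rfl⟩ : k = p.1 ∧ u ++ p.1 :: v = w := by simpa using hw
  rw [List.append_cons, compFam_append, Function.comp_apply, ← Real.dist_eq] at hwr
  rw [← Real.dist_eq] at hv
  refine (le_of_not_gt fun hlt => (hgap u hlt).not_gt ?_).trans (Nat.le_succ u.length)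
  rw [← Real.dist_eq]
  calc dist (compFam F.f (u ++ [p.1]) (F.b p.1 p.2)) (F.b p.1 p.2)
      ≤ dist (F.b p.1 p.2) (compFam F.f v x) + dist (compFam F.f (u ++ [p.1]) (compFam F.f v x))
          (F.b p.1 p.2) := by
        simpa using (dist_triangle _ _ _).trans
          (add_le_add_left ((F.lipschitzWith_one_compFam (u ++ [p.1])).dist_le_mul _ _) _)
    _ < r + r := add_lt_add (dist_comm (F.b p.1 p.2) _ ▸ hv) hwr
    _ = 2 * r := (two_mul r).symm

theorem BreaksNonperiodic.exists_suffixCount_nearBreak_le {F : CPLIFS m l}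
    (hF : F.BreaksNonperiodic) {η : ℝ} (hη : 0 < η) :
    ∃ r > 0, ∃ P : ℕ, ∀ x w,
      (suffixCount (fun v => ∃ p, F.NearBreak r x p v) w : ℝ) ≤ η * w.length + P := by
  set P := Fintype.card (Σ k : Fin m, Fin (l k))
  obtain ⟨M, hM⟩ := exists_nat_gt (P / η)
  have hM0 : (0 : ℝ) < M := lt_of_le_of_lt (by positivity) hM
  obtain ⟨d, hd, hgap⟩ := hF.exists_forall_le_abs_sub M
  refine ⟨d / 2, half_pos hd, P, fun x w => ?_⟩
  set n := suffixCount (fun v => ∃ p, F.NearBreak (d / 2) x p v) w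
  have mul_le : M * n ≤ P * (w.length + M) :=
    calc M * n ≤ M * ∑ p, suffixCount (F.NearBreak (d / 2) x p) w :=
          Nat.mul_le_mul_left M (suffixCount_exists_le _ w)
      _ = ∑ p, M * suffixCount (F.NearBreak (d / 2) x p) w := Finset.mul_sum _ _ _
      _ ≤ ∑ _p : Σ k : Fin m, Fin (l k), (w.length + M) := Finset.sum_le_sum fun p _ =>
          mul_suffixCount_le (fun u v hu hv huv => hv.le_length
            (fun u' hu' => (mul_div_cancel₀ d two_ne_zero).trans_le (hgap p.1 p.2 u' hu')) hu huv) w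
      _ = P * (w.length + M) := by simp [P]
  have mul_le' : (M : ℝ) * n ≤ P * (w.length + M) := mod_cast mul_le
  refine le_of_mul_le_mul_left ?_ hM0
  calc (M : ℝ) * n ≤ P * w.length + M * P := by linarith
    _ ≤ M * η * w.length + M * P := by gcongr; exact ((div_lt_iff₀ hη).1 hM).le
    _ = M * (η * w.length + P) := by ring

/-! ### Comparison of cylinder lengths -/

/-- The last map applied along `w` is affine, with slopes of the same index, on the cylinder of `F`
over `S` and on that of `G` over `T`. -/
def CommonPiece (F G : CPLIFS m l) (S T : Set ℝ) (w : List (Fin m)) : Prop :=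
  ∃ k v i, w = k :: v ∧ compFam F.f v '' S ⊆ F.piece k i ∧ compFam G.f v '' T ⊆ G.piece k i

theorem exists_forall_length_le_or_exists_nearBreak {F G : CPLIFS m l} {K : ℝ≥0} (hK : K < 1)
    (hF : ∀ k, LipschitzWith K (F.f k)) {r δ : ℝ} (hr : 0 < r) (hδ0 : 0 ≤ δ)
    (hδ : δ / (1 - K) ≤ r / 4) (hFG : ∀ k x, |F.f k x - G.f k x| ≤ δ)
    (hb : ∀ k j, |G.b k j - F.b k j| ≤ r / 2) {S T : Set ℝ} (hS : Bornology.IsBounded S)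
    (hT : Bornology.IsBounded T) (x : ℝ) :
    ∃ N, ∀ w, ¬CommonPiece F G S T w → w.length ≤ N ∨ ∃ p, F.NearBreak r x p w := by
  obtain ⟨N, hN⟩ := exists_forall_image_compFam_subset_closedBall hK hF (hS.union hT) x
    (show 0 < r / 4 by positivity)
  refine ⟨N, fun w hw => ?_⟩
  rcases w with _ | ⟨k, v⟩
  · exact .inl (Nat.zero_le N)
  by_contra! hfar
  have hlen : N ≤ v.length := Nat.le_of_lt_succ hfar.1
  obtain ⟨i, hi⟩ := F.exists_closedBall_subset_piece k (y := compFam F.f v x) (r := r)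
    fun j => le_of_not_gt fun hj => hfar.2 ⟨k, j⟩ ⟨v, rfl, hj⟩
  refine hw ⟨k, v, i, rfl, ?_, ?_⟩
  · exact (image_mono subset_union_left).trans <| (hN v hlen).trans <|
      (Metric.closedBall_subset_closedBall (by linarith)).trans hi
  · refine subset_trans ?_ (closedBall_sub_subset_piece hr.le hi (hb k))
    rintro _ ⟨z, hz, rfl⟩
    calc dist (compFam G.f v z) (compFam F.f v x)
        ≤ dist (compFam G.f v z) (compFam F.f v z) + dist (compFam F.f v z) (compFam F.f v x) :=
          dist_triangle _ _ _
      _ ≤ r / 4 + r / 4 := add_le_add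
          ((dist_comm _ _).trans_le ((dist_compFam_le hK hF hδ0 hFG v z).trans hδ))
          (hN v hlen (mem_image_of_mem _ (.inr hz)))
      _ = r - r / 2 := by ring

theorem BreaksNonperiodic.exists_suffixCount_not_commonPiece_le {F : CPLIFS m l}
    (hF : F.BreaksNonperiodic) {η : ℝ} (hη : 0 < η) :
    ∃ δ > 0, ∀ G : CPLIFS m l, (∀ k x, |F.f k x - G.f k x| < δ) →
      ∀ S T : Set ℝ, S.Nonempty → Bornology.IsBounded S → Bornology.IsBounded T →
        ∃ P : ℕ, ∀ w,
          (suffixCount (fun v => ¬CommonPiece F G S T v) w : ℝ) ≤ η * w.length + P := by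
  obtain ⟨K, hK⟩ := F.exists_contractingWith
  have hK1 : K < 1 := (hK ⟨0, two_pos.trans_le F.hm⟩).1
  have hK0 : (0 : ℝ) < 1 - K := sub_pos.2 hK1
  obtain ⟨r, hr, P, hP⟩ := hF.exists_suffixCount_nearBreak_le hη
  obtain ⟨δ, hδ, hbreak⟩ := F.exists_forall_abs_break_sub_lt (half_pos hr)
  refine ⟨min δ (r / 4 * (1 - K)), by positivity, fun G hFG S T hSne hS hT => ?_⟩
  obtain ⟨x, -⟩ := hSne
  obtain ⟨N, hN⟩ := exists_forall_length_le_or_exists_nearBreak hK1 (fun k => (hK k).2) hr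
    (by positivity) ((div_le_iff₀ hK0).2 (min_le_right _ _)) (fun k x => (hFG k x).le)
    (fun k j => (hbreak G (fun k x => (hFG k x).trans_le (min_le_left _ _)) k j).le) hS hT x
  refine ⟨N + 1 + P, fun w => ?_⟩
  have hle : suffixCount (fun v => ¬CommonPiece F G S T v) w ≤
      N + 1 + suffixCount (fun v => ∃ p, F.NearBreak r x p v) w :=
    (suffixCount_mono hN w).trans <| (suffixCount_or_le _ _ w).trans <|
      Nat.add_le_add_right (suffixCount_length_le N w) _
  calc (suffixCount (fun v => ¬CommonPiece F G S T v) w : ℝ)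
      ≤ (N + 1 : ℕ) + suffixCount (fun v => ∃ p, F.NearBreak r x p v) w := mod_cast hle
    _ ≤ (N + 1 : ℕ) + (η * w.length + P) := by gcongr; exact hP x w
    _ = η * w.length + (N + 1 + P : ℕ) := by push_cast; ring

theorem diam_image_compFam_le {F G : CPLIFS m l} {A B C : ℝ} (hA : 0 ≤ A) (hB : 1 ≤ B)
    (hC : 1 ≤ C) (hρ : ∀ k i, |G.ρ k i| ≤ B * |F.ρ k i|)
    (hF : ∀ k T, IsConnected T → IsCompact T → Metric.diam T ≤ C * Metric.diam (F.f k '' T))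
    {S T : Set ℝ} (hS : IsConnected S) (hSc : IsCompact S) (hT : IsCompact T)
    (hST : Metric.diam T ≤ A * Metric.diam S) (w : List (Fin m)) :
    Metric.diam (compFam G.f w '' T) ≤
      A * C ^ suffixCount (fun v => ¬CommonPiece F G S T v) w * B ^ w.length *
        Metric.diam (compFam F.f w '' S) := by
  classical
  induction w with
  | nil =>
    simp only [compFam, List.foldr_nil, image_id, List.length_nil, pow_zero, mul_one]
    exact hST.trans (by gcongr; exact le_mul_of_one_le_right hA (one_le_pow₀ hC))
  | cons k v ih =>
    have hFv := continuous_compFam F.hcont v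
    have hGv := continuous_compFam G.hcont v
    rw [suffixCount_cons, compFam_cons, compFam_cons, image_comp, image_comp, List.length_cons]
    set n := suffixCount (fun v => ¬CommonPiece F G S T v) v
    set S' := compFam F.f v '' S
    set T' := compFam G.f v '' T
    by_cases hw : CommonPiece F G S T (k :: v)
    · obtain ⟨k', v', i, hkv, hSi, hTi⟩ := id hw
      obtain ⟨rfl, rfl⟩ := List.cons_eq_cons.1 hkv
      rw [if_neg (not_not.2 hw), add_zero, diam_image_of_eqOn_affine ((G.eqOn_piece k i).mono hTi),
        diam_image_of_eqOn_affine ((F.eqOn_piece k i).mono hSi)]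
      calc |G.ρ k i| * Metric.diam T'
          ≤ B * |F.ρ k i| * (A * C ^ n * B ^ v.length * Metric.diam S') := by
            gcongr
            exact hρ k i
        _ = A * C ^ n * B ^ (v.length + 1) * (|F.ρ k i| * Metric.diam S') := by ring
    · have lipschitzWith_one : LipschitzWith 1 (G.f k) := G.lipschitzWith_one_compFam [k]
      rw [if_pos hw]
      calc Metric.diam (G.f k '' T') ≤ Metric.diam T' := by
            simpa using lipschitzWith_one.diam_image_le T' (hT.image hGv).isBounded
        _ ≤ A * C ^ n * B ^ v.length * Metric.diam S' := ih
        _ ≤ A * C ^ n * B ^ (v.length + 1) * (C * Metric.diam (F.f k '' S')) := by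
            gcongr
            · exact Nat.le_succ _
            · exact hF k S' (hS.image _ hFv.continuousOn) (hSc.image hFv)
        _ = A * C ^ (n + 1) * B ^ (v.length + 1) * Metric.diam (F.f k '' S') := by ring

theorem BreaksNonperiodic.exists_forall_diam_image_compFam_le {F : CPLIFS m l}
    (hF : F.BreaksNonperiodic) {η : ℝ} (hη : 0 < η) :
    ∃ δ > 0, ∀ G : CPLIFS m l, (∀ k i, abs (Real.log |F.ρ k i| - Real.log |G.ρ k i|) < δ) →
      (∀ k x, |F.f k x - G.f k x| < δ) →
      ∀ S T : Set ℝ, IsConnected S → IsCompact S → 0 < Metric.diam S → IsCompact T →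
        ∃ A > 0, ∀ w, Metric.diam (compFam G.f w '' T) ≤
          A * Real.exp η ^ w.length * Metric.diam (compFam F.f w '' S) := by
  obtain ⟨C, hC1, hC⟩ := F.exists_diam_le_mul_diam_image
  have hlogC : 0 ≤ Real.log C := Real.log_nonneg hC1
  set θ := η / 2 / (Real.log C + 1)
  have hθ : θ * Real.log C ≤ η / 2 := by
    rw [div_mul_eq_mul_div, div_le_iff₀ (by positivity)]
    nlinarith
  obtain ⟨δ, hδ, hcount⟩ := hF.exists_suffixCount_not_commonPiece_le (show 0 < θ by positivity)
  refine ⟨min δ (η / 2), by positivity, fun G hρ hFG S T hS hSc hS0 hT => ?_⟩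
  have slope_le (k : Fin m) (i : Fin (l k + 1)) : |G.ρ k i| ≤ Real.exp (η / 2) * |F.ρ k i| :=
    abs_le_exp_mul_abs (F.hρ0 k i) (G.hρ0 k i) ((hρ k i).le.trans (min_le_right _ _))
  obtain ⟨P, hP⟩ := hcount G (fun k x => (hFG k x).trans_le (min_le_left _ _)) S T hS.nonempty
    hSc.isBounded hT.isBounded
  set A := Metric.diam T / Metric.diam S + 1
  have hST : Metric.diam T ≤ A * Metric.diam S := by
    rw [add_mul, div_mul_cancel₀ _ hS0.ne']
    linarith
  have hA : 0 < A := by positivity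
  refine ⟨A * Real.exp (P * Real.log C), by positivity, fun w => ?_⟩
  calc Metric.diam (compFam G.f w '' T)
      ≤ A * C ^ suffixCount (fun v => ¬CommonPiece F G S T v) w * Real.exp (η / 2) ^ w.length *
          Metric.diam (compFam F.f w '' S) :=
        diam_image_compFam_le hA.le (Real.one_le_exp (by positivity)) hC1 slope_le hC hS hSc hT
          hST w
    _ ≤ A * (Real.exp (P * Real.log C) * Real.exp (η / 2) ^ w.length) *
          Real.exp (η / 2) ^ w.length * Metric.diam (compFam F.f w '' S) := by
        gcongr
        exact (pow_le_exp_mul_exp_pow hC1 (hP w)).trans (by gcongr)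
    _ = A * Real.exp (P * Real.log C) * Real.exp η ^ w.length *
          Metric.diam (compFam F.f w '' S) := by
        rw [← add_halves η, Real.exp_add, mul_pow, add_halves]
        ring

/-! ### Pressure -/

theorem exists_suppInt_f_eq_Icc (F : CPLIFS m l) : ∃ a b, a < b ∧ suppInt F.f = Icc a b :=
  let ⟨_, hK⟩ := F.exists_contractingWith
  exists_suppInt_eq_Icc hK

theorem isConnected_suppInt (F : CPLIFS m l) : IsConnected (suppInt F.f) := by
  obtain ⟨a, b, hab, h⟩ := F.exists_suppInt_f_eq_Icc
  exact h ▸ isConnected_Icc hab.le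

theorem isCompact_suppInt (F : CPLIFS m l) : IsCompact (suppInt F.f) := by
  obtain ⟨a, b, -, h⟩ := F.exists_suppInt_f_eq_Icc
  exact h ▸ isCompact_Icc

theorem diam_suppInt_pos (F : CPLIFS m l) : 0 < Metric.diam (suppInt F.f) := by
  obtain ⟨a, b, hab, h⟩ := F.exists_suppInt_f_eq_Icc
  rw [h, Real.diam_Icc hab.le]
  exact sub_pos.2 hab

/-- The sum `∑ |I_{i₁…iₙ}|ˢ` over the words of length `n`, whose exponential growth rate is the
pressure at `s`. -/
def partitionSum (F : CPLIFS m l) (s : ℝ) (n : ℕ) : ℝ :=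
  ∑ w : Fin n → Fin m, Metric.diam (compFam F.f (List.ofFn w) '' suppInt F.f) ^ s

variable {F G : CPLIFS m l} {s A B : ℝ}

theorem partitionSum_le_mul_pow (F : CPLIFS m l) (hs : 0 ≤ s) (n : ℕ) :
    F.partitionSum s n ≤ Metric.diam (suppInt F.f) ^ s * (m : ℝ) ^ n :=
  calc F.partitionSum s n ≤ ∑ _w : Fin n → Fin m, Metric.diam (suppInt F.f) ^ s := by
        refine Finset.sum_le_sum fun w _ => Real.rpow_le_rpow Metric.diam_nonneg ?_ hs
        simpa using (F.lipschitzWith_one_compFam (List.ofFn w)).diam_image_le _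
          F.isCompact_suppInt.isBounded
    _ = Metric.diam (suppInt F.f) ^ s * (m : ℝ) ^ n := by simp [mul_comm]

theorem exists_mul_pow_le_partitionSum (F : CPLIFS m l) (hs : 0 ≤ s) :
    ∃ A > 0, ∃ B > 0, ∀ n, A * B ^ n ≤ F.partitionSum s n := by
  obtain ⟨C, hC1, hC⟩ := F.exists_diam_le_mul_diam_image
  have hC0 : 0 < C := one_pos.trans_le hC1
  have hD := F.diam_suppInt_pos
  refine ⟨Metric.diam (suppInt F.f) ^ s, by positivity, C⁻¹ ^ s, by positivity, fun n => ?_⟩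
  let w : Fin n → Fin m := fun _ => ⟨0, two_pos.trans_le F.hm⟩
  have hw : Metric.diam (suppInt F.f) * C⁻¹ ^ n ≤
      Metric.diam (compFam F.f (List.ofFn w) '' suppInt F.f) := by
    rw [inv_pow, ← div_eq_mul_inv, div_le_iff₀' (by positivity)]
    simpa using F.diam_le_pow_mul_diam_image_compFam hC0.le hC F.isConnected_suppInt
      F.isCompact_suppInt (List.ofFn w)
  calc Metric.diam (suppInt F.f) ^ s * (C⁻¹ ^ s) ^ n
      = (Metric.diam (suppInt F.f) * C⁻¹ ^ n) ^ s := by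
        rw [Real.mul_rpow hD.le (by positivity), Real.rpow_pow_comm (by positivity)]
    _ ≤ Metric.diam (compFam F.f (List.ofFn w) '' suppInt F.f) ^ s :=
        Real.rpow_le_rpow (by positivity) hw hs
    _ ≤ F.partitionSum s n :=
        Finset.single_le_sum (f := fun w : Fin n → Fin m =>
            Metric.diam (compFam F.f (List.ofFn w) '' suppInt F.f) ^ s)
          (fun w _ => Real.rpow_nonneg Metric.diam_nonneg s) (Finset.mem_univ w)

theorem partitionSum_le_mul_partitionSum (hs : 0 ≤ s) (hA : 0 ≤ A) (hB : 0 ≤ B)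
    (h : ∀ w, Metric.diam (compFam G.f w '' suppInt G.f) ≤
      A * B ^ w.length * Metric.diam (compFam F.f w '' suppInt F.f)) (n : ℕ) :
    G.partitionSum s n ≤ A ^ s * (B ^ s) ^ n * F.partitionSum s n := by
  rw [partitionSum, partitionSum, Finset.mul_sum]
  refine Finset.sum_le_sum fun w _ => ?_
  rw [Real.rpow_pow_comm hB, ← Real.mul_rpow hA (by positivity),
    ← Real.mul_rpow (by positivity) Metric.diam_nonneg]
  exact Real.rpow_le_rpow Metric.diam_nonneg (by simpa using h (List.ofFn w)) hs

theorem pressure_le_mul_log_add_pressure (hs : 0 ≤ s) (hA : 0 < A) (hB : 0 < B)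
    (h : ∀ w, Metric.diam (compFam G.f w '' suppInt G.f) ≤
      A * B ^ w.length * Metric.diam (compFam F.f w '' suppInt F.f)) :
    pressure G.f s ≤ s * Real.log B + pressure F.f s := by
  obtain ⟨A₁, hA₁, B₁, hB₁, hF⟩ := F.exists_mul_pow_le_partitionSum hs
  obtain ⟨A₂, hA₂, B₂, hB₂, hG⟩ := G.exists_mul_pow_le_partitionSum hs
  have hFpos (n : ℕ) : 0 < F.partitionSum s n := lt_of_lt_of_le (by positivity) (hF n)
  have hGpos (n : ℕ) : 0 < G.partitionSum s n := lt_of_lt_of_le (by positivity) (hG n)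
  rw [← Real.log_rpow hB]
  exact limsup_inv_mul_log_le (Real.rpow_pos_of_pos hA s) (Real.rpow_pos_of_pos hB s) hGpos hFpos
    (partitionSum_le_mul_partitionSum hs hA.le hB.le h) (isBoundedUnder_ge_inv_mul_log hA₂ hB₂ hG)
    (isBoundedUnder_ge_inv_mul_log hA₁ hB₁ hF)
    (isBoundedUnder_le_inv_mul_log hFpos (Real.rpow_pos_of_pos F.diam_suppInt_pos s)
      (Nat.cast_pos.2 (two_pos.trans_le F.hm)) (F.partitionSum_le_mul_pow hs))

end CPLIFS

theorem pressure_upper_semicontinuous_general {m : ℕ} {l : Fin m → ℕ} {F : CPLIFS m l}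
    (hF : F.BreaksNonperiodic) {s : ℝ} (hs : 0 ≤ s) {ε : ℝ} (hε : 0 < ε) :
    ∃ δ > 0, ∀ G : CPLIFS m l, (∀ k i, abs (Real.log |F.ρ k i| - Real.log |G.ρ k i|) < δ) →
      (∀ k x, |F.f k x - G.f k x| < δ) → pressure G.f s < pressure F.f s + ε := by
  obtain ⟨δ, hδ, hcompare⟩ :=
    hF.exists_forall_diam_image_compFam_le (show 0 < ε / (s + 1) by positivity)
  refine ⟨δ, hδ, fun G hρ hFG => ?_⟩
  obtain ⟨A, hA, hle⟩ := hcompare G hρ hFG (suppInt F.f) (suppInt G.f) F.isConnected_suppInt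
    F.isCompact_suppInt F.diam_suppInt_pos G.isCompact_suppInt
  calc pressure G.f s ≤ s * Real.log (Real.exp (ε / (s + 1))) + pressure F.f s :=
        CPLIFS.pressure_le_mul_log_add_pressure hs hA (Real.exp_pos _) hle
    _ = ε * (s / (s + 1)) + pressure F.f s := by rw [Real.log_exp, mul_div_left_comm]
    _ < ε * 1 + pressure F.f s := by
        gcongr
        rw [div_lt_one (by positivity)]
        exact lt_add_one s
    _ = pressure F.f s + ε := by rw [mul_one, add_comm]

/-- Let `F` be a CPLIFS with attractor `Λ` whose generated self-similar IFS
has no exact overlapping, and let `s ∈ (0, dim_H Λ)`.  Then for every `ε > 0` there is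
`δ > 0` such that every CPLIFS `G` that is δ-close to `F` satisfies `Φ̂(s) < Φ(s) + ε`,
where `Φ, Φ̂` are the natural pressure functions of `F` and `G`. -/
theorem pressure_upper_semicontinuous
    {m : ℕ} {l : Fin m → ℕ} (F : CPLIFS m l)
    (Λ : Set ℝ) (hΛne : Λ.Nonempty) (hΛc : IsCompact Λ)
    (hΛinv : Λ = ⋃ k, F.f k '' Λ)
    (hno : NoExactOverlap F.S)
    (s : ℝ) (hs0 : 0 < s) (hs1 : ENNReal.ofReal s < dimH Λ)
    (ε : ℝ) (hε : 0 < ε) :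
    ∃ δ > (0 : ℝ), ∀ G : CPLIFS m l, CPLIFS.Close δ F G →
      pressure G.f s < pressure F.f s + ε := by
  obtain ⟨δ, hδ, h⟩ :=
    pressure_upper_semicontinuous_general (CPLIFS.breaksNonperiodic_of_noExactOverlap hno) hs0.le hε
  exact ⟨δ, hδ, fun G hG => h G hG.2.1 hG.2.2⟩

end
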